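/- For all positive integers k and m and every tree T of order m, every k-connected finite simple graph G with minimum degree δ(G) ≥ 2(k − 1 + m)² + m − 1 contains a subgraph T′ isomorphic to T such that G − V(T′) is still k-connected. -/

import Mathlib

/-- A graph `G` is `k`-connected if it has at least `k+1` vertices and
deleting any set of fewer than `k` vertices leaves a connected graph. -/
def KConnected {V : Type*} (G : SimpleGraph V) (k : ℕ) : Prop :=
  k + 1 ≤ Nat.card V ∧
    ∀ X : Finset V, X.card < k → (G.induce ((X : Set V)ᶜ)).Connected

/-! Put `n = k - 1 + m`. Among the vertex sets `U` that contain a vertex together with all its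
neighbours and that few edges leave (each vertex of `U` counting for at most `n` of them, fewer than
`2n²` in total), take a minimal one. If at most `n` vertices separated `G[U]`, then one of the two
sides, together with the separator, would be a smaller such set; so `G[U]` stays connected when any
`n` vertices are deleted. Fewer than `2n²` vertices of `U` have a neighbour outside `U`, so the
subgraph induced by the others has minimum degree at least `m - 1` and contains a copy of `T`.
Deleting this copy and at most `k - 1` further vertices leaves `G[U]` connected, and every other
remaining vertex is still joined to `U`: deleting only the further vertices leaves a path from it to
the copy, and this path enters `U` before it reaches the copy. -/

open scoped Finset SimpleGraph

section Connectivity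

variable {V : Type*} {G : SimpleGraph V} {k : ℕ}

theorem preconnected_induce_iff_forall_exists_adj {s : Set V} :
    (G.induce s).Preconnected ↔
      ∀ A ⊆ s, A.Nonempty → (s \ A).Nonempty → ∃ a ∈ A, ∃ b ∈ s \ A, G.Adj a b := by
  constructor
  · rintro h A hAs ⟨a, ha⟩ ⟨b, hbs, hbA⟩
    obtain ⟨p⟩ := h ⟨a, hAs ha⟩ ⟨b, hbs⟩
    obtain ⟨d, -, hfst, hsnd⟩ := p.exists_boundary_dart (Subtype.val ⁻¹' A) ha hbA
    exact ⟨d.fst, hfst, d.snd, ⟨d.snd.2, hsnd⟩, d.adj⟩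
  · intro h u v
    by_contra huv
    obtain ⟨_, ⟨a, hua, rfl⟩, b, ⟨hbs, hb⟩, hab⟩ :=
      h (Subtype.val '' {x | (G.induce s).Reachable u x}) (Subtype.coe_image_subset _ _)
        ⟨u, u, .rfl, rfl⟩ ⟨v, v.2, by simpa using huv⟩
    have hab' : (G.induce s).Adj a ⟨b, hbs⟩ := hab
    exact hb ⟨⟨b, hbs⟩, hua.trans hab'.reachable, rfl⟩

theorem kConnected_of_forall_preconnected (hcard : k + 1 ≤ Nat.card V)
    (h : ∀ X : Finset V, #X < k → (G.induce (X : Set V)ᶜ).Preconnected) : KConnected G k := by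
  refine ⟨hcard, fun X hX ↦ ?_⟩
  have : Finite V := Nat.finite_of_card_ne_zero (by lia)
  have := Fintype.ofFinite V
  have hlt : #X < #(Finset.univ : Finset V) := by
    rw [Finset.card_univ, ← Nat.card_eq_fintype_card]
    lia
  obtain ⟨v, -, hv⟩ := Finset.exists_mem_notMem_of_card_lt_card hlt
  exact (SimpleGraph.connected_iff _).mpr ⟨h X hX, ⟨v, hv⟩⟩

theorem kConnected_induce_of_forall_preconnected {s : Set V} (hcard : k + 1 ≤ Nat.card s)
    (h : ∀ X : Finset V, ↑X ⊆ s → #X < k → (G.induce (s \ X)).Preconnected) :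
    KConnected (G.induce s) k := by
  refine kConnected_of_forall_preconnected hcard fun X hX ↦ ?_
  let Y : Finset V := X.map (.subtype _)
  have hY : (G.induce (s \ Y)).Preconnected := h Y (by simp [Y]) (by simpa [Y] using hX)
  have hmem (v : s) : v ∈ X ↔ (v : V) ∈ Y := by simp [Y]
  let φ : G.induce (s \ Y) →g (G.induce s).induce (X : Set s)ᶜ :=
    ⟨fun v ↦ ⟨⟨v, v.2.1⟩, fun hv ↦ v.2.2 ((hmem _).mp hv)⟩, id⟩
  exact hY.map φ fun v ↦ ⟨⟨v, v.1.2, fun hv ↦ v.2 ((hmem _).mpr hv)⟩, rfl⟩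

variable {U R S : Set V}

/-- An edge of `G - S` leaving `A` cannot end in `R`, as it would start in `U`. -/
theorem exists_adj_of_disjoint_of_neighborSet_subset (hS : (G.induce Sᶜ).Preconnected)
    (hRU : ∀ r ∈ R, G.neighborSet r ⊆ U) (hRS : (R \ S).Nonempty) {A : Set V}
    (hA : A ⊆ (R ∪ S)ᶜ) (hne : A.Nonempty) (hAU : Disjoint A U) :
    ∃ a ∈ A, ∃ b ∈ (R ∪ S)ᶜ \ A, G.Adj a b := by
  obtain ⟨r, hrR, hrS⟩ := hRS
  obtain ⟨a, ha, b, ⟨hbS, hbA⟩, hab⟩ := preconnected_induce_iff_forall_exists_adj.mp hS A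
    (fun x hx hxS ↦ hA hx (.inr hxS)) hne ⟨r, hrS, fun hr ↦ hA hr (.inl hrR)⟩
  have hbR : b ∉ R := fun hb ↦ Set.disjoint_left.mp hAU ha (hRU b hb hab.symm)
  exact ⟨a, ha, b, ⟨by simp_all, hbA⟩, hab⟩

theorem preconnected_induce_compl_union (hS : (G.induce Sᶜ).Preconnected)
    (hU : (G.induce (U \ (R ∪ S))).Preconnected)
    (hRU : ∀ r ∈ R, G.neighborSet r ⊆ U) (hRS : (R \ S).Nonempty) :
    (G.induce (R ∪ S)ᶜ).Preconnected := by
  rw [preconnected_induce_iff_forall_exists_adj]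
  intro A hA hAne hBne
  by_cases hAU : Disjoint A U
  · exact exists_adj_of_disjoint_of_neighborSet_subset hS hRU hRS hA hAne hAU
  by_cases hBU : Disjoint ((R ∪ S)ᶜ \ A) U
  · obtain ⟨b, hb, a, ⟨ha, haB⟩, hba⟩ :=
      exists_adj_of_disjoint_of_neighborSet_subset hS hRU hRS Set.sdiff_subset hBne hBU
    exact ⟨a, by_contra fun haA ↦ haB ⟨ha, haA⟩, b, hb, hba.symm⟩
  · obtain ⟨a, haA, haU⟩ := Set.not_disjoint_iff.mp hAU
    obtain ⟨b, ⟨hb, hbA⟩, hbU⟩ := Set.not_disjoint_iff.mp hBU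
    obtain ⟨x, hx, y, hy, hxy⟩ := preconnected_induce_iff_forall_exists_adj.mp hU (A ∩ U)
      (fun x hx ↦ ⟨hx.2, hA hx.1⟩) ⟨a, haA, haU⟩ ⟨b, ⟨hbU, hb⟩, fun h ↦ hbA h.1⟩
    exact ⟨x, hx.1, y, ⟨hy.1.2, fun hyA ↦ hy.2 ⟨hyA, hy.1.1⟩⟩, hxy⟩

end Connectivity

section TreeEmbedding

variable {V W : Type*} {G : SimpleGraph V} {T : SimpleGraph W}

theorem isContained_of_copy_induce_compl_leaf {v u : W} (hvu : T.Adj v u)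
    (hleaf : ∀ w, T.Adj v w → w = u) (f : SimpleGraph.Copy (T.induce {v}ᶜ) G) {y : V}
    (hy : y ∉ Set.range f) (hadj : G.Adj (f ⟨u, hvu.ne'⟩) y) : T ⊑ G := by
  classical
  let g : W → V := fun a ↦ if h : a = v then y else f ⟨a, h⟩
  have hgv : g v = y := dif_pos rfl
  have hg : ∀ a (h : a ≠ v), g a = f ⟨a, h⟩ := fun a h ↦ dif_neg h
  have hgu : G.Adj (g u) (g v) := by rwa [hgv, hg u hvu.ne']
  refine ⟨⟨⟨g, fun {a b} hab ↦ ?_⟩, fun a b hab ↦ ?_⟩⟩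
  · by_cases ha : a = v
    · subst ha
      exact hleaf b hab ▸ hgu.symm
    · by_cases hb : b = v
      · subst hb
        exact hleaf a hab.symm ▸ hgu
      · rw [hg a ha, hg b hb]
        exact f.toHom.map_adj hab
  · change g a = g b at hab
    have hne : ∀ c, c ≠ v → g c ≠ g v := fun c h heq ↦ hy ⟨⟨c, h⟩, by rw [← hg, heq, hgv]⟩
    by_cases ha : a = v <;> by_cases hb : b = v
    · rw [ha, hb]
    · exact absurd (ha ▸ hab.symm) (hne b hb)
    · exact absurd (hb ▸ hab) (hne a ha)
    · rw [hg a ha, hg b hb] at hab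
      exact congrArg Subtype.val (f.injective hab)

theorem exists_adj_notMem_range_of_card_le_degree [Fintype W] {f : W → V} {w : W}
    [Fintype (G.neighborSet (f w))] (h : Fintype.card W ≤ G.degree (f w)) :
    ∃ y ∉ Set.range f, G.Adj (f w) y := by
  classical
  have hlt : #((Finset.univ.erase w).image f) < #(G.neighborFinset (f w)) := by
    calc #((Finset.univ.erase w).image f) ≤ #(Finset.univ.erase w) := Finset.card_image_le
      _ < Fintype.card W := Finset.card_erase_lt_of_mem (Finset.mem_univ w)
      _ ≤ _ := by simpa using h
  obtain ⟨y, hy, hyf⟩ := Finset.exists_mem_notMem_of_card_lt_card hlt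
  rw [SimpleGraph.mem_neighborFinset] at hy
  refine ⟨y, ?_, hy⟩
  rintro ⟨a, rfl⟩
  have haw : a ≠ w := fun h ↦ hy.ne (congrArg f h.symm)
  exact hyf (Finset.mem_image_of_mem f (Finset.mem_erase.mpr ⟨haw, Finset.mem_univ a⟩))

theorem isContained_of_isTree_of_card_le_degree [Fintype W] [Nonempty V] [G.LocallyFinite]
    (hT : T.IsTree) (hdeg : ∀ v, Fintype.card W ≤ G.degree v + 1) : T ⊑ G := by
  classical
  induction hm : Fintype.card W generalizing W with
  | zero => exact absurd hm (@Fintype.card_ne_zero W _ hT.connected.nonempty)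
  | succ m ih =>
    rcases subsingleton_or_nontrivial W with _ | _
    · obtain ⟨x⟩ := ‹Nonempty V›
      exact ⟨⟨⟨fun _ ↦ x, fun hab ↦ absurd (Subsingleton.elim _ _) hab.ne⟩,
        Function.injective_of_subsingleton _⟩⟩
    · obtain ⟨v, hv⟩ := hT.exists_vert_degree_one_of_nontrivial
      obtain ⟨u, hvu, hleaf⟩ := SimpleGraph.degree_eq_one_iff_existsUnique_adj.mp hv
      have hcard : Fintype.card ({v}ᶜ : Set W) = m := by
        rw [Fintype.card_compl_set, hm, Fintype.card_unique, Nat.add_sub_cancel]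
      have hsub : (T.induce {v}ᶜ).IsTree :=
        ⟨hT.connected.induce_compl_singleton_of_degree_eq_one hv, hT.isAcyclic.induce _⟩
      obtain ⟨f⟩ := ih hsub (fun x ↦ by have := hdeg x; lia) hcard
      obtain ⟨y, hy, hadj⟩ := exists_adj_notMem_range_of_card_le_degree (G := G) (f := f)
        (w := ⟨u, hvu.ne'⟩) (by have := hdeg (f ⟨u, hvu.ne'⟩); lia)
      exact isContained_of_copy_induce_compl_leaf hvu hleaf f hy hadj

theorem degree_induce_eq_card_neighborFinset_inter [DecidableEq V] [G.LocallyFinite] (I : Finset V)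
    (v : I) [Fintype ((G.induce (I : Set V)).neighborSet v)] :
    (G.induce (I : Set V)).degree v = #(G.neighborFinset v ∩ I) := by
  rw [← SimpleGraph.card_neighborFinset_eq_degree, ← Finset.card_map (.subtype _)]
  congr 1
  ext x
  simp

end TreeEmbedding

section OutDegree

variable {V : Type*} [DecidableEq V] (G : SimpleGraph V) [G.LocallyFinite]

/-- The number of neighbours of `v` outside `U`, capped at `n` so that one vertex contributes
boundedly to the size of the boundary of `U`. -/
def cappedOutDegree (n : ℕ) (U : Finset V) (v : V) : ℕ := min n #(G.neighborFinset v \ U)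

/-- The vertices of `U` all of whose neighbours lie in `U`. -/
def innerVertices (U : Finset V) : Finset V := {v ∈ U | G.neighborFinset v ⊆ U}

variable {G} {n : ℕ} {U S : Finset V} {v : V}

theorem mem_innerVertices : v ∈ innerVertices G U ↔ v ∈ U ∧ G.neighborFinset v ⊆ U :=
  Finset.mem_filter

theorem card_le_sum_cappedOutDegree (hn : 0 < n) (hSU : S ⊆ U)
    (hS : Disjoint S (innerVertices G U)) : #S ≤ ∑ v ∈ S, cappedOutDegree G n U v := by
  have hpos : ∀ v ∈ S, 1 ≤ cappedOutDegree G n U v := fun v hv ↦ by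
    have hout : ¬ G.neighborFinset v ⊆ U := fun h ↦
      Finset.disjoint_left.mp hS hv (mem_innerVertices.mpr ⟨hSU hv, h⟩)
    exact le_min hn (Finset.card_pos.mpr (Finset.sdiff_nonempty.mpr hout))
  simpa using Finset.card_nsmul_le_sum S _ 1 hpos

theorem cappedOutDegree_le_add_card_sdiff (n : ℕ) (U B : Finset V) (v : V) :
    cappedOutDegree G n B v ≤ cappedOutDegree G n U v + #(U \ B) := by
  have hcard : #(G.neighborFinset v \ B) ≤ #(G.neighborFinset v \ U) + #(U \ B) :=
    (Finset.card_le_card (sdiff_triangle _ U _)).trans (Finset.card_union_le _ _)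
  simp only [cappedOutDegree]
  lia

theorem degree_lt_card_add_card_neighborFinset_sdiff (hv : v ∈ U) :
    G.degree v < #U + #(G.neighborFinset v \ U) := by
  have hlt : #(G.neighborFinset v ∩ U) < #U :=
    Finset.card_lt_card <| Finset.inter_subset_right.ssubset_of_mem_notMem hv (by simp)
  have hsplit := Finset.card_inter_add_card_sdiff (G.neighborFinset v) U
  rw [SimpleGraph.card_neighborFinset_eq_degree] at hsplit
  lia

theorem degree_lt_card_of_mem_innerVertices (hv : v ∈ innerVertices G U) : G.degree v < #U := by
  obtain ⟨hvU, hN⟩ := mem_innerVertices.mp hv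
  simpa [Finset.sdiff_eq_empty_iff_subset.mpr hN] using
    degree_lt_card_add_card_neighborFinset_sdiff (G := G) hvU

end OutDegree

/-- `(A, B)` is a separation of `G[U]`: the sets `A` and `B` cover `U`, and no edge joins `A \ B` to
`B \ A`. The separator is `A ∩ B`. -/
structure IsSeparation {V : Type*} [DecidableEq V] (G : SimpleGraph V) (U A B : Finset V) :
    Prop where
  union_eq : A ∪ B = U
  not_adj : ∀ a ∈ A \ B, ∀ b ∈ B \ A, ¬ G.Adj a b

namespace IsSeparation

section

variable {V : Type*} [DecidableEq V] {G : SimpleGraph V} {U A B : Finset V}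

theorem symm (h : IsSeparation G U A B) : IsSeparation G U B A :=
  ⟨Finset.union_comm B A ▸ h.union_eq, fun b hb a ha hab ↦ h.not_adj a ha b hb hab.symm⟩

theorem left_ssubset (h : IsSeparation G U A B) (hB : (B \ A).Nonempty) : A ⊂ U := by
  obtain ⟨b, hb⟩ := hB
  rw [Finset.mem_sdiff] at hb
  exact h.union_eq ▸ Finset.subset_union_left.ssubset_of_mem_notMem
    (Finset.mem_union_right A hb.1) hb.2

theorem sum_eq (h : IsSeparation G U A B) (f : V → ℕ) :
    ∑ v ∈ U, f v = ∑ v ∈ A \ B, f v + ∑ v ∈ A ∩ B, f v + ∑ v ∈ B \ A, f v := by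
  rw [← h.union_eq, ← Finset.union_sdiff_self_eq_union, Finset.sum_union Finset.disjoint_sdiff,
    ← Finset.sum_inter_add_sum_sdiff A B, add_comm (∑ v ∈ A ∩ B, f v)]

end

variable {V : Type*} [DecidableEq V] {G : SimpleGraph V} [G.LocallyFinite] {U A B : Finset V}
  {n : ℕ}

theorem neighborFinset_sdiff_left (h : IsSeparation G U A B) {v : V} (hv : v ∈ A \ B) :
    G.neighborFinset v \ A = G.neighborFinset v \ U := by
  ext x
  have hx := h.not_adj v hv x
  simp only [← h.union_eq, Finset.mem_sdiff, Finset.mem_union, SimpleGraph.mem_neighborFinset] at *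
  tauto

theorem sum_sdiff_cappedOutDegree_left (h : IsSeparation G U A B) (n : ℕ) :
    ∑ v ∈ A \ B, cappedOutDegree G n A v = ∑ v ∈ A \ B, cappedOutDegree G n U v :=
  Finset.sum_congr rfl fun _ hv ↦ by rw [cappedOutDegree, h.neighborFinset_sdiff_left hv]; rfl

theorem sum_cappedOutDegree_left (h : IsSeparation G U A B) (n : ℕ) :
    ∑ v ∈ A, cappedOutDegree G n A v =
      ∑ v ∈ A \ B, cappedOutDegree G n U v + ∑ v ∈ A ∩ B, cappedOutDegree G n A v := by
  rw [← h.sum_sdiff_cappedOutDegree_left, add_comm, Finset.sum_inter_add_sum_sdiff]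

theorem card_sdiff_left_le (h : IsSeparation G U A B) (hn : 0 < n)
    (hA : innerVertices G A = ∅) : #(A \ B) ≤ ∑ v ∈ A \ B, cappedOutDegree G n U v :=
  h.sum_sdiff_cappedOutDegree_left n ▸
    card_le_sum_cappedOutDegree hn Finset.sdiff_subset (hA ▸ Finset.disjoint_empty_right _)

theorem cappedOutDegree_eq_of_le_degree (h : IsSeparation G U A B) {v : V} (hv : v ∈ A \ B)
    (hdeg : n + #A ≤ G.degree v + 1) : cappedOutDegree G n U v = n := by
  have hlt := degree_lt_card_add_card_neighborFinset_sdiff (G := G) (Finset.mem_sdiff.mp hv).1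
  rw [h.neighborFinset_sdiff_left hv] at hlt
  exact min_eq_left (by lia)

theorem sum_cappedOutDegree_left_lt (h : IsSeparation G U A B) (hsep : #(A ∩ B) ≤ n)
    (hU : ∑ v ∈ U, cappedOutDegree G n U v < 2 * n ^ 2)
    (hle : ∑ v ∈ A \ B, cappedOutDegree G n U v ≤ ∑ v ∈ B \ A, cappedOutDegree G n U v) :
    ∑ v ∈ A, cappedOutDegree G n A v < 2 * n ^ 2 := by
  have hinter : ∑ v ∈ A ∩ B, cappedOutDegree G n A v ≤ n ^ 2 :=
    calc ∑ v ∈ A ∩ B, cappedOutDegree G n A v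
      _ ≤ #(A ∩ B) * n := Finset.sum_le_card_nsmul _ _ _ fun _ _ ↦ min_le_left _ _
      _ ≤ n * n := by gcongr
      _ = n ^ 2 := (sq n).symm
  rw [h.sum_eq] at hU
  rw [h.sum_cappedOutDegree_left]
  lia

/-- Each vertex of `A ∩ B` gains at most `#(A \ B)` neighbours outside, which the lost contribution
`n * #(A \ B)` of `A \ B` pays for. -/
theorem sum_cappedOutDegree_right_le (h : IsSeparation G U A B) (hsep : #(A ∩ B) ≤ n)
    (hA : ∀ v ∈ A \ B, cappedOutDegree G n U v = n) :
    ∑ v ∈ B, cappedOutDegree G n B v ≤ ∑ v ∈ U, cappedOutDegree G n U v := by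
  have hUB : U \ B = A \ B := by rw [← h.union_eq, Finset.union_sdiff_right]
  have hinter : ∑ v ∈ A ∩ B, cappedOutDegree G n B v ≤
      ∑ v ∈ A ∩ B, cappedOutDegree G n U v + n * #(A \ B) :=
    calc ∑ v ∈ A ∩ B, cappedOutDegree G n B v
      _ ≤ ∑ v ∈ A ∩ B, (cappedOutDegree G n U v + #(A \ B)) :=
        Finset.sum_le_sum fun v _ ↦ hUB ▸ cappedOutDegree_le_add_card_sdiff n U B v
      _ = ∑ v ∈ A ∩ B, cappedOutDegree G n U v + #(A ∩ B) * #(A \ B) := by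
        rw [Finset.sum_add_distrib, Finset.sum_const, smul_eq_mul]
      _ ≤ _ := by gcongr
  have hsdiff : ∑ v ∈ A \ B, cappedOutDegree G n U v = n * #(A \ B) := by
    rw [Finset.sum_const_nat hA, mul_comm]
  rw [h.symm.sum_cappedOutDegree_left, h.sum_eq, Finset.inter_comm B A]
  lia

end IsSeparation

/-- A finite vertex set with an inner vertex and a small boundary, the latter measured by the sum of
the out-degrees capped at `n`. -/
structure IsCluster {V : Type*} [DecidableEq V] (G : SimpleGraph V) [G.LocallyFinite] (n : ℕ)
    (U : Finset V) : Prop where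
  nonempty_innerVertices : (innerVertices G U).Nonempty
  sum_lt : ∑ v ∈ U, cappedOutDegree G n U v < 2 * n ^ 2

section Cluster

variable {V : Type*} [DecidableEq V] {G : SimpleGraph V} [G.LocallyFinite] {n : ℕ}
  {U A B : Finset V}

theorem isCluster_univ [Fintype V] [Nonempty V] (hn : 0 < n) : IsCluster G n Finset.univ where
  nonempty_innerVertices := ⟨Classical.arbitrary V, by simp [mem_innerVertices]⟩
  sum_lt := by
    have hout (v : V) : G.neighborFinset v \ Finset.univ = ∅ :=
      Finset.sdiff_eq_empty_iff_subset.mpr (Finset.subset_univ _)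
    simpa [cappedOutDegree, hout] using Nat.pow_pos hn

theorem IsCluster.pos (h : IsCluster G n U) : 0 < n := by
  have := h.sum_lt
  by_contra! hn
  simp_all

theorem IsCluster.card_sdiff_innerVertices_lt (h : IsCluster G n U) :
    #(U \ innerVertices G U) < 2 * n ^ 2 :=
  calc #(U \ innerVertices G U)
    _ ≤ ∑ v ∈ U \ innerVertices G U, cappedOutDegree G n U v :=
      card_le_sum_cappedOutDegree h.pos Finset.sdiff_subset Finset.sdiff_disjoint
    _ ≤ ∑ v ∈ U, cappedOutDegree G n U v := Finset.sum_le_sum_of_subset Finset.sdiff_subset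
    _ < 2 * n ^ 2 := h.sum_lt

theorem IsCluster.two_mul_sq_lt_card (h : IsCluster G n U) (hdeg : ∀ v, 2 * n ^ 2 ≤ G.degree v) :
    2 * n ^ 2 < #U := by
  obtain ⟨u, hu⟩ := h.nonempty_innerVertices
  exact (hdeg u).trans_lt (degree_lt_card_of_mem_innerVertices hu)

theorem innerVertices_eq_empty_of_ssubset_minimal (hU : Minimal (IsCluster G n) U) (hA : A ⊂ U)
    (hlt : ∑ v ∈ A, cappedOutDegree G n A v < 2 * n ^ 2) : innerVertices G A = ∅ :=
  Finset.not_nonempty_iff_eq_empty.mp fun hne ↦ hU.not_prop_of_lt hA ⟨hne, hlt⟩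

theorem lt_card_inter_of_minimal_of_sum_le (hU : Minimal (IsCluster G n) U)
    (hdeg : ∀ v, 2 * n ^ 2 ≤ G.degree v) (h : IsSeparation G U A B) (hA : (A \ B).Nonempty)
    (hB : (B \ A).Nonempty)
    (hle : ∑ v ∈ A \ B, cappedOutDegree G n U v ≤ ∑ v ∈ B \ A, cappedOutDegree G n U v) :
    n < #(A ∩ B) := by
  by_contra! hsep
  have hn : 0 < n := hU.prop.pos
  have hUlt := hU.prop.sum_lt
  have hUsum := h.sum_eq (cappedOutDegree G n U)
  have hinnerA : innerVertices G A = ∅ := innerVertices_eq_empty_of_ssubset_minimal hU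
    (h.left_ssubset hB) (h.sum_cappedOutDegree_left_lt hsep hUlt hle)
  have hcardA : #(A \ B) ≤ ∑ v ∈ A \ B, cappedOutDegree G n U v := h.card_sdiff_left_le hn hinnerA
  have hfull : ∀ v ∈ A \ B, cappedOutDegree G n U v = n := fun v hv ↦ by
    have hsplit := Finset.card_inter_add_card_sdiff A B
    have hamgm : 2 * n * 1 ≤ n ^ 2 + 1 ^ 2 := two_mul_le_add_sq n 1
    have := hdeg v
    exact h.cappedOutDegree_eq_of_le_degree hv (by lia)
  have hinnerB : innerVertices G B = ∅ := innerVertices_eq_empty_of_ssubset_minimal hU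
    (h.symm.left_ssubset hA) ((h.sum_cappedOutDegree_right_le hsep hfull).trans_lt hUlt)
  have hcardB : #(B \ A) ≤ ∑ v ∈ B \ A, cappedOutDegree G n U v :=
    h.symm.card_sdiff_left_le hn hinnerB
  have hcardU : 2 * n ^ 2 < #U := hU.prop.two_mul_sq_lt_card hdeg
  have hsplit : #U = #(A \ B) + #(A ∩ B) + #(B \ A) := by simpa using h.sum_eq 1
  have hsumA : ∑ v ∈ A \ B, cappedOutDegree G n U v = #(A \ B) * n := Finset.sum_const_nat hfull
  have hmul : #(A \ B) + n ≤ #(A \ B) * n + 1 := by nlinarith [hA.card_pos]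
  lia

theorem lt_card_inter_of_minimal (hU : Minimal (IsCluster G n) U)
    (hdeg : ∀ v, 2 * n ^ 2 ≤ G.degree v) (h : IsSeparation G U A B) (hA : (A \ B).Nonempty)
    (hB : (B \ A).Nonempty) : n < #(A ∩ B) := by
  rcases le_total (∑ v ∈ A \ B, cappedOutDegree G n U v)
    (∑ v ∈ B \ A, cappedOutDegree G n U v) with hle | hle
  · exact lt_card_inter_of_minimal_of_sum_le hU hdeg h hA hB hle
  · exact Finset.inter_comm A B ▸ lt_card_inter_of_minimal_of_sum_le hU hdeg h.symm hB hA hle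

theorem preconnected_induce_sdiff_of_minimal (hU : Minimal (IsCluster G n) U)
    (hdeg : ∀ v, 2 * n ^ 2 ≤ G.degree v) {X : Finset V} (hX : #X ≤ n) :
    (G.induce (U \ X : Set V)).Preconnected := by
  classical
  rw [preconnected_induce_iff_forall_exists_adj]
  intro P hP hPne hQne
  by_contra! hno
  have hsep : IsSeparation G U {v ∈ U | v ∈ P ∨ v ∈ X} {v ∈ U | v ∉ P} := by
    refine ⟨by grind, fun a ha b hb ↦ hno a ?_ b ⟨⟨?_, ?_⟩, ?_⟩⟩ <;> grind
  obtain ⟨p, hp⟩ := hPne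
  obtain ⟨q, ⟨hqU, hqX⟩, hqP⟩ := hQne
  have hlt := lt_card_inter_of_minimal hU hdeg hsep ⟨p, by grind [hP hp]⟩ ⟨q, by grind⟩
  exact hlt.not_ge ((Finset.card_le_card fun v hv ↦ by grind).trans hX)

theorem IsCluster.isContained_induce_innerVertices {W : Type*} [Fintype W] {T : SimpleGraph W}
    (h : IsCluster G n U) (hT : T.IsTree)
    (hdeg : ∀ v, 2 * n ^ 2 + Fintype.card W ≤ G.degree v + 1) :
    T ⊑ G.induce (innerVertices G U : Set V) := by
  classical
  have : Nonempty (innerVertices G U : Set V) := h.nonempty_innerVertices.to_subtype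
  refine isContained_of_isTree_of_card_le_degree hT fun v ↦ ?_
  have hN : G.neighborFinset v \ innerVertices G U ⊆ U \ innerVertices G U :=
    Finset.sdiff_subset_sdiff (mem_innerVertices.mp v.2).2 subset_rfl
  have hsplit := Finset.card_inter_add_card_sdiff (G.neighborFinset v) (innerVertices G U)
  have hle := Finset.card_le_card hN
  have hlt := h.card_sdiff_innerVertices_lt
  have hv := hdeg v
  rw [degree_induce_eq_card_neighborFinset_inter]
  rw [SimpleGraph.card_neighborFinset_eq_degree] at hsplit
  lia

theorem KConnected.induce_compl_of_subset_innerVertices {k : ℕ} (hG : KConnected G k)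
    (hU : Minimal (IsCluster G n) U) (hdeg : ∀ v, 2 * n ^ 2 ≤ G.degree v) {R : Finset V}
    (hR : R.Nonempty) (hRU : R ⊆ innerVertices G U) (hcard : k + #R ≤ n + 1) :
    KConnected (G.induce (R : Set V)ᶜ) k := by
  refine kConnected_induce_of_forall_preconnected ?_ fun X hXR hX ↦ ?_
  · have : Finite V := Nat.finite_of_card_ne_zero (by have := hG.1; lia)
    have := Fintype.ofFinite V
    have hU_lt := hU.prop.two_mul_sq_lt_card hdeg
    have hU_le := Finset.card_le_univ U
    have hn : 0 < n := hU.prop.pos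
    rw [Nat.card_eq_fintype_card, Fintype.card_compl_set]
    simp only [Finset.coe_sort_coe, Fintype.card_coe]
    have hsq : n ≤ n ^ 2 := Nat.le_self_pow two_ne_zero n
    lia
  · have hRX : ((R : Set V) \ X).Nonempty :=
      hR.imp fun r hr ↦ ⟨hr, fun hrX ↦ hXR hrX hr⟩
    have hN : ∀ r ∈ (R : Set V), G.neighborSet r ⊆ U := fun r hr ↦ by
      simpa [← Finset.coe_subset] using (mem_innerVertices.mp (hRU hr)).2
    have hcore : (G.induce (U \ (R ∪ X : Set V))).Preconnected := by
      rw [← Finset.coe_union]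
      exact preconnected_induce_sdiff_of_minimal hU hdeg
        ((Finset.card_union_le R X).trans (by lia))
    rw [Set.sdiff_eq, ← Set.compl_union]
    exact preconnected_induce_compl_union (hG.2 X hX).preconnected hcore hN hRX

end Cluster

/-- For all positive integers `k, m` and every tree `T` of order `m`, every
`k`-connected graph `G` with `δ(G) ≥ 2(k - 1 + m)² + m - 1` contains a
subgraph `T' ≅ T` such that `G - V(T')` is still `k`-connected. -/
theorem stmt_11 {V W : Type*} [Fintype V] [DecidableEq V] [Fintype W]
    (G : SimpleGraph V) [DecidableRel G.Adj] (k m : ℕ) (hk : 0 < k) (hm : 0 < m)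
    (T : SimpleGraph W) (hT : T.IsTree) (hTcard : Fintype.card W = m)
    (hG : KConnected G k)
    (hδ : ∀ v : V, 2 * (k - 1 + m) ^ 2 + m - 1 ≤ G.degree v) :
    ∃ f : W → V, Function.Injective f ∧
      (∀ a b : W, T.Adj a b → G.Adj (f a) (f b)) ∧
      KConnected (G.induce ((Set.range f)ᶜ)) k := by
  have : Nonempty V := (Nat.card_pos_iff.mp (k.succ_pos.trans_le hG.1)).1
  obtain ⟨U, hU⟩ := exists_minimal_of_wellFoundedLT (IsCluster G (k - 1 + m))
    ⟨_, isCluster_univ (by lia)⟩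
  obtain ⟨f⟩ := hU.prop.isContained_induce_innerVertices hT fun v ↦ by have := hδ v; lia
  let g : W ↪ V := f.toEmbedding.trans (.subtype _)
  have hrange : Set.range g = (Finset.univ.map g : Finset V) := by simp
  have : Nonempty W := hT.connected.nonempty
  refine ⟨g, g.injective, fun a b hab ↦ f.toHom.map_adj hab, ?_⟩
  rw [hrange]
  refine hG.induce_compl_of_subset_innerVertices hU (fun v ↦ by have := hδ v; lia)
    (by simp) (fun x hx ↦ ?_) ?_
  · obtain ⟨a, -, rfl⟩ := Finset.mem_map.mp hx
    exact (f a).2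
  · rw [Finset.card_map, Finset.card_univ]
    lia
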